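/- Consider the pp-wave metric with H = z⁻² on U = {(u,v,y,z) ∈ ℝ⁴ : z > 0}, i.e. g = −2 du dv − 2z⁻² du² + dy² + dz². Then each of the following five symmetric tensor fields is a Killing tensor of g, and no nontrivial ℝ-linear combination of them is reducible (in particular each is irreducible): (K₁)_{ab} = −2y²z⁻² δ^u_a δ^u_b − z² δ^y_a δ^y_b + 2yz δ_{(a}^y δ_{b)}^z − y² δ^z_a δ^z_b; (K₂)_{ab} = 2yz⁻² δ^u_a δ^u_b − z δ_{(a}^y δ_{b)}^z + y δ^z_a δ^z_b; (K₃)_{ab} = 2uyz⁻² δ^u_a δ^u_b + z² δ_{(a}^u δ_{b)}^y − yz δ_{(a}^u δ_{b)}^z − uz δ_{(a}^y δ_{b)}^z + uy δ^z_a δ^z_b; (K₄)_{ab} = 2uz⁻² δ^u_a δ^u_b − z δ_{(a}^u δ_{b)}^z + u δ^z_a δ^z_b; (K₅)_{ab} = (z² + 2u²z⁻²) δ^u_a δ^u_b − 2uz δ_{(a}^u δ_{b)}^z + u² δ^z_a δ^z_b. -/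

import Mathlib

noncomputable section

/-- Points of (an open subset of) `ℝ⁴`, with coordinates `(u,v,y,z)` indexed by `0,1,2,3`. -/
abbrev Pt : Type := Fin 4 → ℝ

/-- Partial derivative of a function in the `i`-th coordinate direction. -/
def pd (i : Fin 4) (f : Pt → ℝ) (p : Pt) : ℝ :=
  fderiv ℝ f p (Pi.single i 1)

/-- Kronecker delta `δ^i_a`. -/
def kd (i a : Fin 4) : ℝ := if i = a then 1 else 0

/-- Symmetrized product of Kronecker deltas, `δ_{(a}^i δ_{b)}^j`. -/
def sd (i j a b : Fin 4) : ℝ := (kd i a * kd j b + kd j a * kd i b) / 2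

/-- Components of the pp-wave metric `g = -2 du dv - 2H du² + dy² + dz²`. -/
def ppMetric (H : Pt → ℝ) (p : Pt) (a b : Fin 4) : ℝ :=
  if a = 0 ∧ b = 0 then -2 * H p
  else if (a = 0 ∧ b = 1) ∨ (a = 1 ∧ b = 0) then -1
  else if (a = 2 ∧ b = 2) ∨ (a = 3 ∧ b = 3) then 1
  else 0

/-- Christoffel symbols `Γ^d_{ab}` of the pp-wave metric:
`Γ^v_{uu} = H_{,u}`, `Γ^y_{uu} = Γ^v_{uy} = Γ^v_{yu} = H_{,y}`,
`Γ^z_{uu} = Γ^v_{uz} = Γ^v_{zu} = H_{,z}`, all others zero. -/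
def Gamma (H : Pt → ℝ) (p : Pt) (d a b : Fin 4) : ℝ :=
  if d = 1 ∧ a = 0 ∧ b = 0 then pd 0 H p
  else if (d = 2 ∧ a = 0 ∧ b = 0) ∨ (d = 1 ∧ ((a = 0 ∧ b = 2) ∨ (a = 2 ∧ b = 0))) then pd 2 H p
  else if (d = 3 ∧ a = 0 ∧ b = 0) ∨ (d = 1 ∧ ((a = 0 ∧ b = 3) ∨ (a = 3 ∧ b = 0))) then pd 3 H p
  else 0

/-- Covariant derivative of a covector field: `∇_a X_b = ∂_a X_b - Γ^d_{ab} X_d`. -/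
def covD1 (H : Pt → ℝ) (X : Pt → Fin 4 → ℝ) (p : Pt) (a b : Fin 4) : ℝ :=
  pd a (fun q => X q b) p - ∑ d, Gamma H p d a b * X p d

/-- Covariant derivative of a 2-tensor field:
`∇_c T_{ab} = ∂_c T_{ab} - Γ^d_{ca} T_{db} - Γ^d_{cb} T_{ad}`. -/
def covD2 (H : Pt → ℝ) (T : Pt → Fin 4 → Fin 4 → ℝ) (p : Pt) (c a b : Fin 4) : ℝ :=
  pd c (fun q => T q a b) p - ∑ d, Gamma H p d c a * T p d b
    - ∑ d, Gamma H p d c b * T p a d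

/-- A Killing vector of the pp-wave metric on `U`, given by its covariant components:
a smooth covector field with `∇_{(a}X_{b)} = 0` on `U`. -/
def IsKillingVector (H : Pt → ℝ) (U : Set Pt) (X : Pt → Fin 4 → ℝ) : Prop :=
  (∀ a, ContDiffOn ℝ (⊤ : ℕ∞) (fun p => X p a) U) ∧
  ∀ p ∈ U, ∀ a b, covD1 H X p a b + covD1 H X p b a = 0

/-- A (second order) Killing tensor of the pp-wave metric on `U`: a smooth symmetric
2-tensor field with `∇_{(c}K_{ab)} = 0` on `U`. -/
def IsKillingTensor (H : Pt → ℝ) (U : Set Pt) (K : Pt → Fin 4 → Fin 4 → ℝ) : Prop :=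
  (∀ a b, ContDiffOn ℝ (⊤ : ℕ∞) (fun p => K p a b) U) ∧
  (∀ p a b, K p a b = K p b a) ∧
  ∀ p ∈ U, ∀ a b c,
    covD2 H K p c a b + covD2 H K p a b c + covD2 H K p b c a = 0

/-- A Killing tensor is reducible if (on `U`) it is a constant-coefficient linear combination
of the metric `g_{ab}` and finitely many symmetrized products `X_{(a}Y_{b)}` of Killing
vectors `X`, `Y`. -/
def IsReducible (H : Pt → ℝ) (U : Set Pt) (K : Pt → Fin 4 → Fin 4 → ℝ) : Prop :=
  ∃ (c₀ : ℝ) (n : ℕ) (c : Fin n → ℝ) (X Y : Fin n → Pt → Fin 4 → ℝ),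
    (∀ i, IsKillingVector H U (X i)) ∧ (∀ i, IsKillingVector H U (Y i)) ∧
    ∀ p ∈ U, ∀ a b, K p a b =
      c₀ * ppMetric H p a b + ∑ i, c i * ((X i p a * Y i p b + X i p b * Y i p a) / 2)


/-- The five Killing tensors of the pp-wave spacetime with `H = z⁻²`. -/
def Kex1 : Fin 5 → Pt → Fin 4 → Fin 4 → ℝ :=
  ![fun p a b => -2 * (p 2) ^ 2 / (p 3) ^ 2 * sd 0 0 a b - (p 3) ^ 2 * sd 2 2 a b
      + 2 * (p 2) * (p 3) * sd 2 3 a b - (p 2) ^ 2 * sd 3 3 a b,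
    fun p a b => 2 * (p 2) / (p 3) ^ 2 * sd 0 0 a b - (p 3) * sd 2 3 a b
      + (p 2) * sd 3 3 a b,
    fun p a b => 2 * (p 0) * (p 2) / (p 3) ^ 2 * sd 0 0 a b + (p 3) ^ 2 * sd 0 2 a b
      - (p 2) * (p 3) * sd 0 3 a b - (p 0) * (p 3) * sd 2 3 a b
      + (p 0) * (p 2) * sd 3 3 a b,
    fun p a b => 2 * (p 0) / (p 3) ^ 2 * sd 0 0 a b - (p 3) * sd 0 3 a b
      + (p 0) * sd 3 3 a b,
    fun p a b => ((p 3) ^ 2 + 2 * (p 0) ^ 2 / (p 3) ^ 2) * sd 0 0 a b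
      - 2 * (p 0) * (p 3) * sd 0 3 a b + (p 0) ^ 2 * sd 3 3 a b]

/-!
Along a geodesic `u'' = y'' = 0` and `z'' = 2 z⁻³ u'²`, so if `ξ` and `η` are affine along geodesics
then `(z ξ' - ξ z') (z η' - η z') + 2 z⁻² ξ η u'²` is a constant of motion: this is the polarized
Ermakov–Lewis invariant. Taking `ξ, η ∈ {1, u, y}` produces the five Killing tensors up to
sign, the sixth choice `ξ = η = 1` being reducible.

For irreducibility, the Killing equations for a profile `φ(z)` make `X_z`, `∂_u X_v` and `∂_u² X_z`
independent of `z` and satisfy `φ'' X_z + ∂_u² X_z = 2 φ' ∂_u X_v`. Differentiating this twice in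
`z` eliminates everything but `X_z` and gives `(φ'''² - φ'' φ'''') X_z = 0`, so Killing vectors have
no `z` component for `φ = z⁻²`. The `zz` component of a reducible tensor is thus a constant, whereas
that of `∑ cᵢ Kᵢ` is a quadratic polynomial in `u, y` with no constant term and coefficients `± cᵢ`.
-/

open scoped ContDiff

theorem kd_self (a : Fin 4) : kd a a = 1 :=
  if_pos rfl

theorem kd_of_ne {i a : Fin 4} (h : i ≠ a) : kd i a = 0 :=
  if_neg h

section PartialDerivatives

variable {f g : Pt → ℝ} {p : Pt} {i j : Fin 4}

theorem pd_add (hf : DifferentiableAt ℝ f p) (hg : DifferentiableAt ℝ g p) :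
    pd i (fun q => f q + g q) p = pd i f p + pd i g p := by
  simp [pd, fderiv_fun_add hf hg]

theorem pd_sub (hf : DifferentiableAt ℝ f p) (hg : DifferentiableAt ℝ g p) :
    pd i (fun q => f q - g q) p = pd i f p - pd i g p := by
  simp [pd, fderiv_fun_sub hf hg]

theorem pd_mul (hf : DifferentiableAt ℝ f p) (hg : DifferentiableAt ℝ g p) :
    pd i (fun q => f q * g q) p = f p * pd i g p + g p * pd i f p := by
  simp [pd, fderiv_fun_mul hf hg]

theorem pd_neg : pd i (fun q => -f q) p = -pd i f p := by
  simp [pd, fderiv_fun_neg]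

theorem pd_const (c : ℝ) : pd i (fun _ => c) p = 0 := by
  simp [pd]

theorem pd_const_mul (c : ℝ) (hf : DifferentiableAt ℝ f p) :
    pd i (fun q => c * f q) p = c * pd i f p := by
  rw [pd_mul (differentiableAt_const c) hf, pd_const, mul_zero, add_zero]

theorem pd_comp_coord {φ : ℝ → ℝ} (hφ : DifferentiableAt ℝ φ (p i)) :
    pd j (fun q => φ (q i)) p = deriv φ (p i) * kd i j := by
  have hcoord : HasFDerivAt (fun q : Pt => q i) (ContinuousLinearMap.proj (R := ℝ) i) p :=
    (ContinuousLinearMap.proj (R := ℝ) (φ := fun _ : Fin 4 => ℝ) i).hasFDerivAt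
  have hcomp : HasFDerivAt (fun q : Pt => φ (q i))
      (deriv φ (p i) • ContinuousLinearMap.proj (R := ℝ) i) p :=
    hφ.hasDerivAt.comp_hasFDerivAt p hcoord
  simp [pd, hcomp.fderiv, kd, Pi.single_apply]

theorem pd_coord : pd j (fun q => q i) p = kd i j := by
  simpa using pd_comp_coord (φ := id) (p := p) (i := i) (j := j) differentiableAt_id

theorem differentiableAt_iteratedDeriv {φ : ℝ → ℝ} {t : ℝ} (hφ : ContDiffAt ℝ ∞ φ t) (n : ℕ) :
    DifferentiableAt ℝ (iteratedDeriv n φ) t := by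
  rw [iteratedDeriv_eq_equiv_comp, LinearIsometryEquiv.comp_differentiableAt_iff]
  exact (hφ.iteratedFDeriv_right (m := 1) (by exact_mod_cast le_top)).differentiableAt (by simp)

theorem pd_iteratedDeriv_comp_coord_mul {φ : ℝ → ℝ} (hφ : ContDiffAt ℝ ∞ φ (p i)) (n : ℕ)
    (hf : DifferentiableAt ℝ f p) :
    pd j (fun q => iteratedDeriv n φ (q i) * f q) p =
      iteratedDeriv n φ (p i) * pd j f p + iteratedDeriv (n + 1) φ (p i) * kd i j * f p := by
  have dφ := differentiableAt_iteratedDeriv hφ n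
  rw [pd_mul (by fun_prop) hf, pd_comp_coord dφ, iteratedDeriv_succ, mul_comm (f p)]

theorem pd_comm (hf : ContDiffAt ℝ 2 f p) : pd i (pd j f) p = pd j (pd i f) p := by
  have hsymm : IsSymmSndFDerivAt ℝ f p := hf.isSymmSndFDerivAt (by simp)
  have hdiff : DifferentiableAt ℝ (fderiv ℝ f) p :=
    (hf.fderiv_right (m := 1) (by norm_num)).differentiableAt (by simp)
  have hpd (i j : Fin 4) : pd i (pd j f) p =
      fderiv ℝ (fderiv ℝ f) p (Pi.single i 1) (Pi.single j 1) := by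
    unfold pd
    simp [fderiv_clm_apply hdiff (differentiableAt_const _)]
  rw [hpd, hpd]
  exact hsymm _ _

variable {U : Set Pt}

theorem pd_congr (hU : IsOpen U) (hfg : Set.EqOn f g U) (hp : p ∈ U) : pd i f p = pd i g p := by
  simp only [pd, (Filter.eventuallyEq_of_mem (hU.mem_nhds hp) hfg).fderiv_eq]

theorem contDiffOn_pd (hU : IsOpen U) (hf : ContDiffOn ℝ ∞ f U) : ContDiffOn ℝ ∞ (pd i f) U :=
  (hf.fderiv_of_isOpen hU (by simp)).clm_apply contDiffOn_const

theorem contDiffOn_comp_coord {φ : ℝ → ℝ} (hφ : ∀ q ∈ U, ContDiffAt ℝ ∞ φ (q i)) :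
    ContDiffOn ℝ ∞ (fun q => φ (q i)) U :=
  fun q hq => ((hφ q hq).comp q (contDiff_apply ℝ ℝ i).contDiffAt).contDiffWithinAt

theorem differentiableAt_of_contDiffOn (hU : IsOpen U) (hf : ContDiffOn ℝ ∞ f U) (hp : p ∈ U) :
    DifferentiableAt ℝ f p :=
  (hf.contDiffAt (hU.mem_nhds hp)).differentiableAt (by simp)

theorem pd_comm_of_contDiffOn (hU : IsOpen U) (hf : ContDiffOn ℝ ∞ f U) (hp : p ∈ U) :
    pd i (pd j f) p = pd j (pd i f) p :=
  pd_comm ((hf.contDiffAt (hU.mem_nhds hp)).of_le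
    (WithTop.coe_le_coe.2 (le_top : (2 : ℕ∞) ≤ ⊤)))

end PartialDerivatives

section CovariantDerivatives

variable {H f : Pt → ℝ} {X Y : Pt → Fin 4 → ℝ} {p : Pt}

theorem Gamma_comm (d a b : Fin 4) : Gamma H p d a b = Gamma H p d b a := by
  fin_cases d <;> fin_cases a <;> fin_cases b <;> simp [Gamma]

theorem Gamma_u (a b : Fin 4) : Gamma H p 0 a b = 0 := by
  simp [Gamma]

theorem Gamma_y (a b : Fin 4) : Gamma H p 2 a b = pd 2 H p * kd 0 a * kd 0 b := by
  fin_cases a <;> fin_cases b <;> simp [Gamma, kd]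

theorem Gamma_z (a b : Fin 4) : Gamma H p 3 a b = pd 3 H p * kd 0 a * kd 0 b := by
  fin_cases a <;> fin_cases b <;> simp [Gamma, kd]

theorem covD1_kd (i a b : Fin 4) : covD1 H (fun _ => kd i) p a b = -Gamma H p i a b := by
  simp [covD1, pd_const, kd]

theorem covD1_sub (hX : ∀ b, DifferentiableAt ℝ (fun q => X q b) p)
    (hY : ∀ b, DifferentiableAt ℝ (fun q => Y q b) p) (a b : Fin 4) :
    covD1 H (fun q b => X q b - Y q b) p a b = covD1 H X p a b - covD1 H Y p a b := by
  simp only [covD1, pd_sub (hX b) (hY b), mul_sub, Finset.sum_sub_distrib]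
  ring

theorem covD1_smul (hf : DifferentiableAt ℝ f p)
    (hX : ∀ b, DifferentiableAt ℝ (fun q => X q b) p) (a b : Fin 4) :
    covD1 H (fun q b => f q * X q b) p a b = pd a f p * X p b + f p * covD1 H X p a b := by
  simp only [covD1, pd_mul hf (hX b), mul_left_comm _ (f p), ← Finset.mul_sum]
  ring

/-- The symmetrized product `X_{(a} Y_{b)}` of two covector fields. -/
def symProd (X Y : Pt → Fin 4 → ℝ) (p : Pt) (a b : Fin 4) : ℝ :=
  (X p a * Y p b + X p b * Y p a) / 2

theorem symProd_comm_apply (a b : Fin 4) : symProd X Y p a b = symProd X Y p b a := by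
  simp only [symProd, add_comm]

theorem contDiffOn_symProd {U : Set Pt} (hX : ∀ a, ContDiffOn ℝ ∞ (fun q => X q a) U)
    (hY : ∀ a, ContDiffOn ℝ ∞ (fun q => Y q a) U) (a b : Fin 4) :
    ContDiffOn ℝ ∞ (fun q => symProd X Y q a b) U :=
  (((hX a).mul (hY b)).add ((hX b).mul (hY a))).div_const 2

theorem differentiableAt_symProd (hX : ∀ b, DifferentiableAt ℝ (fun q => X q b) p)
    (hY : ∀ b, DifferentiableAt ℝ (fun q => Y q b) p) (a b : Fin 4) :
    DifferentiableAt ℝ (fun q => symProd X Y q a b) p := by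
  unfold symProd
  fun_prop

theorem covD2_symProd (hX : ∀ b, DifferentiableAt ℝ (fun q => X q b) p)
    (hY : ∀ b, DifferentiableAt ℝ (fun q => Y q b) p) (c a b : Fin 4) :
    covD2 H (symProd X Y) p c a b =
      (covD1 H X p c a * Y p b + X p a * covD1 H Y p c b
        + covD1 H X p c b * Y p a + X p b * covD1 H Y p c a) / 2 := by
  have hpd : pd c (fun q => symProd X Y q a b) p =
      (X p a * pd c (fun q => Y q b) p + Y p b * pd c (fun q => X q a) p
        + (X p b * pd c (fun q => Y q a) p + Y p a * pd c (fun q => X q b) p)) / 2 := by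
    simp only [symProd, div_eq_inv_mul]
    rw [pd_const_mul _ (((hX a).fun_mul (hY b)).fun_add ((hX b).fun_mul (hY a))),
      pd_add ((hX a).fun_mul (hY b)) ((hX b).fun_mul (hY a)), pd_mul (hX a) (hY b),
      pd_mul (hX b) (hY a)]
  simp only [covD2, hpd]
  simp only [covD1, symProd, Fin.sum_univ_four]
  ring

variable {S T : Pt → Fin 4 → Fin 4 → ℝ}

theorem covD2_add (hS : ∀ a b, DifferentiableAt ℝ (fun q => S q a b) p)
    (hT : ∀ a b, DifferentiableAt ℝ (fun q => T q a b) p) (c a b : Fin 4) :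
    covD2 H (fun q a b => S q a b + T q a b) p c a b = covD2 H S p c a b + covD2 H T p c a b := by
  simp only [covD2, pd_add (hS a b) (hT a b), mul_add, Finset.sum_add_distrib]
  ring

theorem covD2_neg (c a b : Fin 4) :
    covD2 H (fun q a b => -S q a b) p c a b = -covD2 H S p c a b := by
  simp only [covD2, pd_neg, mul_neg, Finset.sum_neg_distrib]
  ring

theorem IsKillingTensor.neg {U : Set Pt} (hS : IsKillingTensor H U S) :
    IsKillingTensor H U (fun p a b => -S p a b) := by
  obtain ⟨hsmooth, hsymm, hcyclic⟩ := hS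
  refine ⟨fun a b => (hsmooth a b).neg, fun p a b => congrArg Neg.neg (hsymm p a b),
    fun p hp a b c => ?_⟩
  simp only [covD2_neg]
  linear_combination -hcyclic p hp a b c

end CovariantDerivatives

section ParallelGradient

/-- A smooth function with `∇_a ∇_b ξ = 0`, i.e. one that is affine along every geodesic. -/
def HasParallelGradient (H : Pt → ℝ) (U : Set Pt) (ξ : Pt → ℝ) : Prop :=
  ContDiffOn ℝ ∞ ξ U ∧ ∀ p ∈ U, ∀ a b, covD1 H (fun q b => pd b ξ q) p a b = 0

variable {H : Pt → ℝ} {U : Set Pt}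

theorem hasParallelGradient_const (c : ℝ) : HasParallelGradient H U (fun _ => c) :=
  ⟨contDiffOn_const, fun p _ a b => by simp [covD1, pd_const]⟩

theorem hasParallelGradient_coord {i : Fin 4} (hi : ∀ p ∈ U, ∀ a b, Gamma H p i a b = 0) :
    HasParallelGradient H U (fun q => q i) :=
  ⟨(contDiff_apply ℝ ℝ i).contDiffOn, fun p hp a b => by
    simp only [pd_coord, covD1_kd, hi p hp a b, neg_zero]⟩

end ParallelGradient

section Ermakov

/-- The covector field `z dξ - ξ dz`, whose contraction with the velocity of a geodesic is the
Wronskian of `z` and `ξ`. -/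
def wronskianForm (ξ : Pt → ℝ) (p : Pt) (a : Fin 4) : ℝ :=
  p 3 * pd a ξ p - ξ p * kd 3 a

/-- The polarized Ermakov–Lewis invariant
`(z ξ' - ξ z') (z η' - η z') + 2 H ξ η u'²` of the geodesic motion in the `z` direction,
written as a symmetric tensor field. -/
def ermakovTensor (H ξ η : Pt → ℝ) (p : Pt) (a b : Fin 4) : ℝ :=
  symProd (wronskianForm ξ) (wronskianForm η) p a b
    + symProd (fun q a => 2 * H q * ξ q * η q * kd 0 a) (fun _ => kd 0) p a b

variable {H ξ η : Pt → ℝ} {U : Set Pt} {p : Pt}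

theorem contDiffOn_wronskianForm (hU : IsOpen U) (hξ : ContDiffOn ℝ ∞ ξ U) (a : Fin 4) :
    ContDiffOn ℝ ∞ (fun q => wronskianForm ξ q a) U :=
  ((contDiff_apply ℝ ℝ 3).contDiffOn.mul (contDiffOn_pd hU hξ)).sub (hξ.mul contDiffOn_const)

theorem covD1_wronskianForm (hU : IsOpen U) (hξ : HasParallelGradient H U ξ) (hp : p ∈ U)
    (a b : Fin 4) :
    covD1 H (wronskianForm ξ) p a b =
      kd 3 a * pd b ξ p - pd a ξ p * kd 3 b + ξ p * pd 3 H p * kd 0 a * kd 0 b := by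
  have dξ : DifferentiableAt ℝ ξ p := differentiableAt_of_contDiffOn hU hξ.1 hp
  have dpd (b : Fin 4) : DifferentiableAt ℝ (pd b ξ) p :=
    differentiableAt_of_contDiffOn hU (contDiffOn_pd hU hξ.1) hp
  have dz : DifferentiableAt ℝ (fun q : Pt => q 3) p := by fun_prop
  have dkd (b : Fin 4) : DifferentiableAt ℝ (fun _ : Pt => kd 3 b) p := differentiableAt_const _
  change covD1 H (fun q b => q 3 * pd b ξ q - ξ q * kd 3 b) p a b = _
  rw [covD1_sub (X := fun q b => q 3 * pd b ξ q) (fun b => dz.fun_mul (dpd b))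
      (fun b => dξ.fun_mul (dkd b)), covD1_smul dz dpd,
    covD1_smul (X := fun _ => kd 3) dξ dkd, hξ.2 p hp, covD1_kd, Gamma_z, pd_coord]
  ring

theorem covD1_smul_du {f : Pt → ℝ} (hf : DifferentiableAt ℝ f p) (a b : Fin 4) :
    covD1 H (fun q b => f q * kd 0 b) p a b = pd a f p * kd 0 b := by
  rw [covD1_smul (X := fun _ => kd 0) hf (fun _ => differentiableAt_const _), covD1_kd, Gamma_u]
  ring

theorem covD2_ermakovTensor (hU : IsOpen U) (hH : ContDiffOn ℝ ∞ H U)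
    (hξ : HasParallelGradient H U ξ) (hη : HasParallelGradient H U η) (hp : p ∈ U)
    (c a b : Fin 4) :
    covD2 H (ermakovTensor H ξ η) p c a b =
      (covD1 H (wronskianForm ξ) p c a * wronskianForm η p b
        + wronskianForm ξ p a * covD1 H (wronskianForm η) p c b
        + covD1 H (wronskianForm ξ) p c b * wronskianForm η p a
        + wronskianForm ξ p b * covD1 H (wronskianForm η) p c a) / 2
      + 2 * (pd c H p * ξ p * η p + H p * (pd c ξ p * η p + ξ p * pd c η p))
        * kd 0 a * kd 0 b := by
  have dH : DifferentiableAt ℝ H p := differentiableAt_of_contDiffOn hU hH hp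
  have dξ : DifferentiableAt ℝ ξ p := differentiableAt_of_contDiffOn hU hξ.1 hp
  have dη : DifferentiableAt ℝ η p := differentiableAt_of_contDiffOn hU hη.1 hp
  have dWξ (b : Fin 4) := differentiableAt_of_contDiffOn hU (contDiffOn_wronskianForm hU hξ.1 b) hp
  have dWη (b : Fin 4) := differentiableAt_of_contDiffOn hU (contDiffOn_wronskianForm hU hη.1 b) hp
  have dF : DifferentiableAt ℝ (fun q => 2 * H q * ξ q * η q) p := by fun_prop
  have dFdu (b : Fin 4) : DifferentiableAt ℝ (fun q => 2 * H q * ξ q * η q * kd 0 b) p := by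
    fun_prop
  have ddu (b : Fin 4) : DifferentiableAt ℝ (fun _ : Pt => kd 0 b) p := differentiableAt_const _
  have hpd : pd c (fun q => 2 * H q * ξ q * η q) p =
      2 * (pd c H p * ξ p * η p + H p * (pd c ξ p * η p + ξ p * pd c η p)) := by
    rw [pd_mul (by fun_prop) dη, pd_mul (by fun_prop) dξ, pd_const_mul _ dH]
    ring
  unfold ermakovTensor
  rw [covD2_add (differentiableAt_symProd dWξ dWη) (differentiableAt_symProd dFdu ddu),
    covD2_symProd dWξ dWη, covD2_symProd dFdu ddu, covD1_smul_du dF, covD1_smul_du dF,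
    covD1_kd, covD1_kd, Gamma_u, Gamma_u, hpd]
  ring

theorem isKillingTensor_ermakovTensor {φ : ℝ → ℝ} (hU : IsOpen U)
    (hφ : ∀ p ∈ U, ContDiffAt ℝ ∞ φ (p 3))
    (hhom : ∀ p ∈ U, p 3 * deriv φ (p 3) = -2 * φ (p 3))
    (hξ : HasParallelGradient (fun q => φ (q 3)) U ξ)
    (hη : HasParallelGradient (fun q => φ (q 3)) U η) :
    IsKillingTensor (fun q => φ (q 3)) U (ermakovTensor (fun q => φ (q 3)) ξ η) := by
  have hH := contDiffOn_comp_coord hφ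
  refine ⟨fun a b => ?_, fun p a b => ?_, fun p hp a b c => ?_⟩
  · exact (contDiffOn_symProd (contDiffOn_wronskianForm hU hξ.1)
      (contDiffOn_wronskianForm hU hη.1) a b).add
        (contDiffOn_symProd (Y := fun _ => kd 0)
          (fun _ => (((contDiffOn_const.mul hH).mul hξ.1).mul hη.1).mul contDiffOn_const)
          (fun _ => contDiffOn_const) a b)
  · simp only [ermakovTensor, symProd_comm_apply a b]
  · simp only [covD2_ermakovTensor hU hH hξ hη hp, covD1_wronskianForm hU hξ hp,
      covD1_wronskianForm hU hη hp, pd_comp_coord ((hφ p hp).differentiableAt (by simp)), kd_self,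
      wronskianForm]
    linear_combination
      ((ξ p * pd a η p + η p * pd a ξ p) * kd 0 b * kd 0 c
        + (ξ p * pd b η p + η p * pd b ξ p) * kd 0 c * kd 0 a
        + (ξ p * pd c η p + η p * pd c ξ p) * kd 0 a * kd 0 b) * hhom p hp

end Ermakov

namespace IsKillingVector

variable {H : Pt → ℝ} {U : Set Pt} {X : Pt → Fin 4 → ℝ} {p : Pt}

theorem pd_add_pd (hX : IsKillingVector H U X) (hp : p ∈ U) (a b : Fin 4) :
    pd a (fun q => X q b) p + pd b (fun q => X q a) p = 2 * ∑ d, Gamma H p d a b * X p d := by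
  have h := hX.2 p hp a b
  simp only [covD1, Gamma_comm _ b a] at h
  linear_combination h

theorem pd_v_u (hX : IsKillingVector H U X) (hp : p ∈ U) :
    pd 1 (fun q => X q 0) p = -pd 0 (fun q => X q 1) p := by
  have hΓ : ∑ d, Gamma H p d 1 0 * X p d = 0 := by simp [Gamma]
  linear_combination hX.pd_add_pd hp 1 0 + 2 * hΓ

theorem pd_v_v (hX : IsKillingVector H U X) (hp : p ∈ U) : pd 1 (fun q => X q 1) p = 0 := by
  have hΓ : ∑ d, Gamma H p d 1 1 * X p d = 0 := by simp [Gamma]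
  linear_combination hX.pd_add_pd hp 1 1 / 2 + hΓ

theorem pd_v_z (hX : IsKillingVector H U X) (hp : p ∈ U) :
    pd 1 (fun q => X q 3) p = -pd 3 (fun q => X q 1) p := by
  have hΓ : ∑ d, Gamma H p d 1 3 * X p d = 0 := by simp [Gamma]
  linear_combination hX.pd_add_pd hp 1 3 + 2 * hΓ

theorem pd_z_z (hX : IsKillingVector H U X) (hp : p ∈ U) : pd 3 (fun q => X q 3) p = 0 := by
  have hΓ : ∑ d, Gamma H p d 3 3 * X p d = 0 := by simp [Gamma]
  linear_combination hX.pd_add_pd hp 3 3 / 2 + hΓ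

theorem pd_u_u (hX : IsKillingVector H U X) (hp : p ∈ U) :
    pd 0 (fun q => X q 0) p = pd 0 H p * X p 1 + pd 2 H p * X p 2 + pd 3 H p * X p 3 := by
  have hΓ : ∑ d, Gamma H p d 0 0 * X p d =
      pd 0 H p * X p 1 + pd 2 H p * X p 2 + pd 3 H p * X p 3 := by
    simp [Gamma, Fin.sum_univ_four]
  linear_combination hX.pd_add_pd hp 0 0 / 2 + hΓ

theorem pd_z_u (hX : IsKillingVector H U X) (hp : p ∈ U) :
    pd 3 (fun q => X q 0) p = 2 * (pd 3 H p * X p 1) - pd 0 (fun q => X q 3) p := by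
  have hΓ : ∑ d, Gamma H p d 3 0 * X p d = pd 3 H p * X p 1 := by simp [Gamma]
  linear_combination hX.pd_add_pd hp 3 0 + 2 * hΓ

theorem differentiableAt (hX : IsKillingVector H U X) (hU : IsOpen U) (hp : p ∈ U) (a : Fin 4) :
    DifferentiableAt ℝ (fun q => X q a) p :=
  differentiableAt_of_contDiffOn hU (hX.1 a) hp

theorem differentiableAt_pd (hX : IsKillingVector H U X) (hU : IsOpen U) (hp : p ∈ U)
    (i a : Fin 4) : DifferentiableAt ℝ (pd i fun q => X q a) p :=
  differentiableAt_of_contDiffOn hU (contDiffOn_pd hU (hX.1 a)) hp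

theorem pd_comm (hX : IsKillingVector H U X) (hU : IsOpen U) (hp : p ∈ U) (i j a : Fin 4) :
    pd i (pd j fun q => X q a) p = pd j (pd i fun q => X q a) p :=
  pd_comm_of_contDiffOn hU (hX.1 a) hp

theorem pd_z_pd_u_v (hX : IsKillingVector H U X) (hU : IsOpen U) (hH : ContDiffOn ℝ ∞ H U)
    (hHv : ∀ p ∈ U, pd 1 H p = 0) (hp : p ∈ U) : pd 3 (pd 0 fun q => X q 1) p = 0 := by
  have hHvz : pd 1 (pd 3 H) p = 0 := by
    rw [pd_comm_of_contDiffOn hU hH hp, pd_congr hU hHv hp, pd_const]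
  have dHz : DifferentiableAt ℝ (pd 3 H) p :=
    differentiableAt_of_contDiffOn hU (contDiffOn_pd hU hH) hp
  have dv := hX.differentiableAt hU hp 1
  have huz : pd 1 (pd 3 fun q => X q 0) p = -pd 1 (pd 0 fun q => X q 3) p := by
    rw [pd_congr hU (fun q hq => hX.pd_z_u hq) hp,
      pd_sub ((dHz.fun_mul dv).const_mul 2) (hX.differentiableAt_pd hU hp 0 3),
      pd_const_mul _ (dHz.fun_mul dv), pd_mul dHz dv, hX.pd_v_v hp, hHvz]
    ring
  rw [hX.pd_comm hU hp, pd_congr hU (fun q hq => hX.pd_v_u hq) hp, pd_neg,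
    hX.pd_comm hU hp 1 0, pd_congr hU (fun q hq => hX.pd_v_z hq) hp, pd_neg,
    hX.pd_comm hU hp 0 3] at huz
  linarith

theorem pd_z_pd_u_pd_u_z (hX : IsKillingVector H U X) (hU : IsOpen U) (hp : p ∈ U) :
    pd 3 (pd 0 (pd 0 fun q => X q 3)) p = 0 := by
  have hzu : Set.EqOn (pd 3 (pd 0 fun q => X q 3)) (fun _ => 0) U := fun q hq => by
    rw [hX.pd_comm hU hq, pd_congr hU (fun r hr => hX.pd_z_z hr) hq, pd_const]
  rw [pd_comm_of_contDiffOn hU (contDiffOn_pd hU (hX.1 3)) hp, pd_congr hU hzu hp, pd_const]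

variable {φ : ℝ → ℝ}

theorem iteratedDeriv_two_mul_z (hX : IsKillingVector (fun q => φ (q 3)) U X) (hU : IsOpen U)
    (hφ : ∀ p ∈ U, ContDiffAt ℝ ∞ φ (p 3)) (hp : p ∈ U) :
    iteratedDeriv 2 φ (p 3) * X p 3 + pd 0 (pd 0 fun q => X q 3) p =
      2 * (iteratedDeriv 1 φ (p 3) * pd 0 (fun q => X q 1) p) := by
  have hpdH (q : Pt) (hq : q ∈ U) (c : Fin 4) :
      pd c (fun q => φ (q 3)) q = iteratedDeriv 1 φ (q 3) * kd 3 c := by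
    rw [pd_comp_coord ((hφ q hq).differentiableAt (by simp)), iteratedDeriv_one]
  have huu : Set.EqOn (pd 0 fun q => X q 0) (fun q => iteratedDeriv 1 φ (q 3) * X q 3) U :=
    fun q hq => by simp [hX.pd_u_u hq, hpdH q hq, kd]
  have hzu : Set.EqOn (pd 3 fun q => X q 0)
      (fun q => 2 * (iteratedDeriv 1 φ (q 3) * X q 1) - pd 0 (fun q => X q 3) q) U :=
    fun q hq => by simp only [hX.pd_z_u hq, hpdH q hq, kd_self, mul_one]
  have dφ' := differentiableAt_iteratedDeriv (hφ p hp) 1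
  have dv := hX.differentiableAt hU hp 1
  have hmixed := hX.pd_comm hU hp 0 3 0
  rw [pd_congr hU hzu hp, pd_congr hU huu hp,
    pd_sub (by fun_prop) (hX.differentiableAt_pd hU hp 0 3), pd_const_mul _ (by fun_prop),
    pd_iteratedDeriv_comp_coord_mul (hφ p hp) 1 dv,
    pd_iteratedDeriv_comp_coord_mul (hφ p hp) 1 (hX.differentiableAt hU hp 3),
    hX.pd_z_z hp, kd_self, kd_of_ne (by decide)] at hmixed
  linear_combination -hmixed

theorem pd_z_iteratedDeriv_mul_z (hX : IsKillingVector H U X) (hU : IsOpen U) (hp : p ∈ U)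
    (hφ : ContDiffAt ℝ ∞ φ (p 3)) (n : ℕ) :
    pd 3 (fun q => iteratedDeriv n φ (q 3) * X q 3) p = iteratedDeriv (n + 1) φ (p 3) * X p 3 := by
  rw [pd_iteratedDeriv_comp_coord_mul hφ n (hX.differentiableAt hU hp 3), hX.pd_z_z hp, kd_self]
  ring

theorem pd_z_iteratedDeriv_mul_pd_u_v (hX : IsKillingVector (fun q => φ (q 3)) U X)
    (hU : IsOpen U) (hφ : ∀ p ∈ U, ContDiffAt ℝ ∞ φ (p 3)) (hp : p ∈ U) (n : ℕ) :
    pd 3 (fun q => 2 * (iteratedDeriv n φ (q 3) * pd 0 (fun r => X r 1) q)) p =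
      2 * (iteratedDeriv (n + 1) φ (p 3) * pd 0 (fun q => X q 1) p) := by
  have hHv (q : Pt) (hq : q ∈ U) : pd 1 (fun q => φ (q 3)) q = 0 := by
    rw [pd_comp_coord ((hφ q hq).differentiableAt (by simp)), kd_of_ne (by decide), mul_zero]
  have dφ := differentiableAt_iteratedDeriv (hφ p hp) n
  have dXuv := hX.differentiableAt_pd hU hp 0 1
  rw [pd_const_mul _ (by fun_prop), pd_iteratedDeriv_comp_coord_mul (hφ p hp) n dXuv,
    hX.pd_z_pd_u_v hU (contDiffOn_comp_coord hφ) hHv hp, kd_self]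
  ring

theorem iteratedDeriv_three_mul_z (hX : IsKillingVector (fun q => φ (q 3)) U X) (hU : IsOpen U)
    (hφ : ∀ p ∈ U, ContDiffAt ℝ ∞ φ (p 3)) (hp : p ∈ U) :
    iteratedDeriv 3 φ (p 3) * X p 3 =
      2 * (iteratedDeriv 2 φ (p 3) * pd 0 (fun q => X q 1) p) := by
  have dφ'' := differentiableAt_iteratedDeriv (hφ p hp) 2
  have dXz := hX.differentiableAt hU hp 3
  have dXuuz : DifferentiableAt ℝ (pd 0 (pd 0 fun q => X q 3)) p :=
    differentiableAt_of_contDiffOn hU (contDiffOn_pd hU (contDiffOn_pd hU (hX.1 3))) hp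
  have hz := pd_congr (i := 3) hU (fun q hq => hX.iteratedDeriv_two_mul_z hU hφ hq) hp
  rwa [pd_add (by fun_prop) dXuuz, hX.pd_z_iteratedDeriv_mul_z hU hp (hφ p hp),
    hX.pd_z_pd_u_pd_u_z hU hp, add_zero, hX.pd_z_iteratedDeriv_mul_pd_u_v hU hφ hp] at hz

theorem iteratedDeriv_four_mul_z (hX : IsKillingVector (fun q => φ (q 3)) U X) (hU : IsOpen U)
    (hφ : ∀ p ∈ U, ContDiffAt ℝ ∞ φ (p 3)) (hp : p ∈ U) :
    iteratedDeriv 4 φ (p 3) * X p 3 =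
      2 * (iteratedDeriv 3 φ (p 3) * pd 0 (fun q => X q 1) p) := by
  rw [← hX.pd_z_iteratedDeriv_mul_z hU hp (hφ p hp) 3,
    pd_congr hU (fun q hq => hX.iteratedDeriv_three_mul_z hU hφ hq) hp,
    hX.pd_z_iteratedDeriv_mul_pd_u_v hU hφ hp 2]

theorem z_eq_zero (hX : IsKillingVector (fun q => φ (q 3)) U X) (hU : IsOpen U)
    (hφ : ∀ p ∈ U, ContDiffAt ℝ ∞ φ (p 3)) (hp : p ∈ U)
    (hne : iteratedDeriv 3 φ (p 3) ^ 2 ≠ iteratedDeriv 2 φ (p 3) * iteratedDeriv 4 φ (p 3)) :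
    X p 3 = 0 := by
  have hprod : (iteratedDeriv 3 φ (p 3) ^ 2
      - iteratedDeriv 2 φ (p 3) * iteratedDeriv 4 φ (p 3)) * X p 3 = 0 := by
    linear_combination iteratedDeriv 3 φ (p 3) * hX.iteratedDeriv_three_mul_z hU hφ hp
      - iteratedDeriv 2 φ (p 3) * hX.iteratedDeriv_four_mul_z hU hφ hp
  exact (mul_eq_zero.1 hprod).resolve_left (sub_ne_zero.2 hne)

end IsKillingVector

theorem IsReducible.exists_row_eq_mul_ppMetric {H : Pt → ℝ} {U : Set Pt}
    {K : Pt → Fin 4 → Fin 4 → ℝ} {a : Fin 4} (hK : IsReducible H U K)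
    (ha : ∀ X, IsKillingVector H U X → ∀ p ∈ U, X p a = 0) :
    ∃ c₀ : ℝ, ∀ p ∈ U, ∀ b, K p a b = c₀ * ppMetric H p a b := by
  obtain ⟨c₀, n, c, X, Y, hX, hY, hK⟩ := hK
  refine ⟨c₀, fun p hp b => ?_⟩
  simp [hK p hp a b, ha _ (hX _) p hp, ha _ (hY _) p hp]

section InverseSquare

theorem isOpen_zPos : IsOpen {p : Pt | 0 < p 3} :=
  isOpen_lt continuous_const (continuous_apply 3)

theorem contDiffAt_inv_sq {t : ℝ} (ht : t ≠ 0) : ContDiffAt ℝ ∞ (fun z : ℝ => (z ^ 2)⁻¹) t :=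
  (contDiffAt_id.pow 2).inv (pow_ne_zero 2 ht)

theorem iteratedDeriv_inv_sq (n : ℕ) (t : ℝ) :
    iteratedDeriv n (fun z : ℝ => (z ^ 2)⁻¹) t =
      (∏ i ∈ Finset.range n, (-2 - i : ℝ)) * (t ^ (n + 2))⁻¹ := by
  have hzpow : (fun z : ℝ => (z ^ 2)⁻¹) = fun z => z ^ (-2 : ℤ) := by
    ext z
    rw [zpow_neg, zpow_ofNat]
  have hexp : (-2 - n : ℤ) = -((n + 2 : ℕ) : ℤ) := by
    push_cast
    ring
  rw [iteratedDeriv_eq_iterate, hzpow, iter_deriv_zpow, hexp, zpow_neg, zpow_natCast]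
  norm_num

theorem mul_deriv_inv_sq {t : ℝ} (ht : t ≠ 0) :
    t * deriv (fun z : ℝ => (z ^ 2)⁻¹) t = -2 * (t ^ 2)⁻¹ := by
  rw [← iteratedDeriv_one, iteratedDeriv_inv_sq, Finset.prod_range_one]
  field_simp
  push_cast
  ring

theorem IsKillingVector.z_eq_zero_of_inv_sq {X : Pt → Fin 4 → ℝ} {p : Pt}
    (hX : IsKillingVector (fun p => ((p 3) ^ 2)⁻¹) {p | 0 < p 3} X) (hp : 0 < p 3) :
    X p 3 = 0 := by
  refine hX.z_eq_zero (φ := fun z => (z ^ 2)⁻¹) isOpen_zPos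
    (fun q hq => contDiffAt_inv_sq (ne_of_gt hq)) hp ?_
  have hz : p 3 ≠ 0 := ne_of_gt hp
  have hdet : iteratedDeriv 3 (fun z : ℝ => (z ^ 2)⁻¹) (p 3) ^ 2
      - iteratedDeriv 2 (fun z : ℝ => (z ^ 2)⁻¹) (p 3)
        * iteratedDeriv 4 (fun z : ℝ => (z ^ 2)⁻¹) (p 3) = -144 / p 3 ^ 10 := by
    simp only [iteratedDeriv_inv_sq, Finset.prod_range_succ, Finset.prod_range_zero]
    field_simp
    push_cast
    ring
  rw [← sub_ne_zero, hdet]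
  positivity

theorem Kex1_eq_ermakovTensor {H : Pt → ℝ} (hH : H = fun p => ((p 3) ^ 2)⁻¹) :
    Kex1 = ![fun p a b => -ermakovTensor H (fun q => q 2) (fun q => q 2) p a b,
      ermakovTensor H (fun _ => 1) (fun q => q 2),
      ermakovTensor H (fun q => q 0) (fun q => q 2),
      ermakovTensor H (fun _ => 1) (fun q => q 0),
      ermakovTensor H (fun q => q 0) (fun q => q 0)] := by
  funext i p a b
  fin_cases i <;>
    simp [Kex1, ermakovTensor, wronskianForm, symProd, sd, pd_const, pd_coord, hH] <;> ring

theorem isKillingTensor_Kex1 (i : Fin 5) :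
    IsKillingTensor (fun p => ((p 3) ^ 2)⁻¹) {p | 0 < p 3} (Kex1 i) := by
  set H : Pt → ℝ := fun p => ((p 3) ^ 2)⁻¹ with hH
  set U : Set Pt := {p | 0 < p 3}
  have hsmooth (p : Pt) (hp : p ∈ U) := contDiffAt_inv_sq (ne_of_gt hp)
  have hHy (p : Pt) (hp : p ∈ U) : pd 2 H p = 0 := by
    rw [hH, pd_comp_coord (φ := fun z => (z ^ 2)⁻¹) ((hsmooth p hp).differentiableAt (by simp)),
      kd_of_ne (by decide), mul_zero]
  have h1 : HasParallelGradient H U (fun _ => 1) := hasParallelGradient_const 1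
  have hu : HasParallelGradient H U (fun q => q 0) :=
    hasParallelGradient_coord fun _ _ => Gamma_u
  have hy : HasParallelGradient H U (fun q => q 2) :=
    hasParallelGradient_coord fun p hp a b => by simp only [Gamma_y, hHy p hp, zero_mul]
  have hE {ξ η : Pt → ℝ} (hξ : HasParallelGradient H U ξ) (hη : HasParallelGradient H U η) :
      IsKillingTensor H U (ermakovTensor H ξ η) :=
    isKillingTensor_ermakovTensor (φ := fun z => (z ^ 2)⁻¹) isOpen_zPos hsmooth
      (fun p hp => mul_deriv_inv_sq (ne_of_gt hp)) hξ hη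
  rw [Kex1_eq_ermakovTensor hH]
  fin_cases i
  exacts [(hE hy hy).neg, hE h1 hy, hE hu hy, hE h1 hu, hE hu hu]

theorem sum_mul_Kex1_zz (c : Fin 5 → ℝ) (p : Pt) :
    ∑ i, c i * Kex1 i p 3 3 =
      -(c 0 * p 2 ^ 2) + c 1 * p 2 + c 2 * (p 0 * p 2) + c 3 * p 0 + c 4 * p 0 ^ 2 := by
  simp [Fin.sum_univ_five, Kex1, sd, kd]

theorem eq_zero_of_sum_mul_Kex1_zz_eq_const {c : Fin 5 → ℝ} {c₀ : ℝ}
    (h : ∀ p : Pt, 0 < p 3 → ∑ i, c i * Kex1 i p 3 3 = c₀) : c = 0 := by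
  have hpoly (u y : ℝ) :
      -(c 0 * y ^ 2) + c 1 * y + c 2 * (u * y) + c 3 * u + c 4 * u ^ 2 = c₀ := by
    simpa [sum_mul_Kex1_zz] using h ![u, 0, y, 1] (by simp)
  have h00 := hpoly 0 0
  have h10 := hpoly 1 0
  have h20 := hpoly (-1) 0
  have h01 := hpoly 0 1
  have h02 := hpoly 0 (-1)
  have h11 := hpoly 1 1
  funext i
  fin_cases i <;> simp <;> linarith

end InverseSquare

/-- For the pp-wave metric with `H = z⁻²` on `{z > 0}`, the five tensor
fields `K₁,…,K₅` are Killing tensors and no nontrivial linear combination of them is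
reducible (in particular each is irreducible). -/
theorem stmt3 :
    let U : Set Pt := {p | 0 < p 3}
    let H : Pt → ℝ := fun p => ((p 3) ^ 2)⁻¹
    (∀ i, IsKillingTensor H U (Kex1 i)) ∧
    (∀ c : Fin 5 → ℝ,
      IsReducible H U (fun p a b => ∑ i, c i * Kex1 i p a b) → c = 0) := by
  intro U H
  refine ⟨isKillingTensor_Kex1, fun c hc => ?_⟩
  have hzero (X) (hX : IsKillingVector H U X) (p) (hp : p ∈ U) : X p 3 = 0 :=
    hX.z_eq_zero_of_inv_sq hp
  obtain ⟨c₀, hrow⟩ := hc.exists_row_eq_mul_ppMetric hzero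
  refine eq_zero_of_sum_mul_Kex1_zz_eq_const (c₀ := c₀) fun p hp => ?_
  simpa [ppMetric] using hrow p hp 3

end
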